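/- Let q ≥ 2 and L ≥ 2 be integers, let C ⊆ [q]^n be a code, and let ε ∈ [0,1]. If every subset of L distinct codewords of C has average pairwise relative Hamming distance at least (1−1/q)(1−ε), then C is ((1−1/q)(1−√(ε+1/L)), L−1)-list decodable. -/

import Mathlib

open scoped BigOperators

/-- Relative Hamming distance between two strings of length n. -/
noncomputable def relDist {n : ℕ} {A : Type*} (x y : Fin n → A) : ℝ :=
  ({i : Fin n | x i ≠ y i}.ncard : ℝ) / (n : ℝ)

/-- A code C ⊆ A^n is (ρ, L)-list decodable if every Hamming ball of relative
radius (strictly) ρ contains at most L codewords. -/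
def listDecodable {n : ℕ} {A : Type*} (C : Set (Fin n → A)) (ρ L : ℝ) : Prop :=
  ∀ y : Fin n → A, ({c | c ∈ C ∧ relDist c y < ρ}.ncard : ℝ) ≤ L

/-- Average pairwise relative Hamming distance of an L-tuple of codewords. -/
noncomputable def avgPairDist {n L : ℕ} {A : Type*} (c : Fin L → (Fin n → A)) : ℝ :=
  (∑ i : Fin L, ∑ j : Fin L, if i < j then relDist (c i) (c j) else 0) / (L.choose 2 : ℝ)

/-!
Send each letter to a vertex of a regular simplex centred at the origin. Writing `θ = 1 - 1 / q`,
words `x`, `y` become vectors of inner product proportional to `θ - δ(x, y)`. For words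
`c₁, …, c_L` and a centre `y`, the Cauchy–Schwarz inequality between `∑ cᵢ` and `y` then gives
`(∑ᵢ (θ - δ(cᵢ, y)))² ≤ θ ∑ᵢⱼ (θ - δ(cᵢ, cⱼ))`.
A lower bound on the average pairwise distance bounds the right-hand side, the diagonal `i = j`
accounting for the `1 / L`, so the words `cᵢ` cannot all be close to `y`.
-/

section Sum

variable {ι M : Type*} [Fintype ι] [LinearOrder ι] [AddCommMonoid M]

lemma sum_sum_eq_two_nsmul_sum_sum_lt {f : ι → ι → M} (hsymm : ∀ i j, f i j = f j i)
    (hdiag : ∀ i, f i i = 0) :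
    ∑ i, ∑ j, f i j = 2 • ∑ i, ∑ j, if i < j then f i j else 0 := by
  have hsplit (i j : ι) : f i j = (if i < j then f i j else 0) + if j < i then f j i else 0 := by
    rcases lt_trichotomy i j with h | rfl | h
    · simp [h, h.not_gt]
    · simp [hdiag]
    · simp [h, h.not_gt, hsymm i j]
  calc ∑ i, ∑ j, f i j
      = ∑ i, ∑ j, ((if i < j then f i j else 0) + if j < i then f j i else 0) :=
        Finset.sum_congr rfl fun i _ ↦ Finset.sum_congr rfl fun j _ ↦ hsplit i j
    _ = (∑ i, ∑ j, if i < j then f i j else 0) + ∑ i, ∑ j, if j < i then f j i else 0 := by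
        simp only [Finset.sum_add_distrib]
    _ = 2 • ∑ i, ∑ j, if i < j then f i j else 0 := by
        rw [Finset.sum_comm (f := fun i j ↦ if j < i then f j i else 0), two_nsmul]

end Sum

section RelDist

variable {n : ℕ} {A : Type*}

lemma relDist_eq_hammingDist_div [DecidableEq A] (x y : Fin n → A) :
    relDist x y = hammingDist x y / n := by
  simp [relDist, hammingDist, Set.ncard_eq_toFinset_card']

lemma relDist_self (x : Fin n → A) : relDist x x = 0 := by
  simp [relDist]

lemma relDist_comm (x y : Fin n → A) : relDist x y = relDist y x := by
  simp [relDist, ne_comm]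

lemma natCast_mul_relDist [DecidableEq A] (x y : Fin n → A) :
    n * relDist x y = hammingDist x y := by
  rcases n.eq_zero_or_pos with rfl | hn
  · simp [hammingDist]
  · rw [relDist_eq_hammingDist_div, mul_div_cancel₀ _ (by positivity)]

lemma sum_sum_relDist_eq_mul_avgPairDist {L : ℕ} (hL : 2 ≤ L) (c : Fin L → Fin n → A) :
    ∑ i, ∑ j, relDist (c i) (c j) = L * (L - 1) * avgPairDist c := by
  have hL' : (L : ℝ) - 1 ≠ 0 := by
    have : (2 : ℝ) ≤ L := by exact_mod_cast hL
    linarith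
  rw [sum_sum_eq_two_nsmul_sum_sum_lt (fun _ _ ↦ relDist_comm _ _) (fun _ ↦ relDist_self _),
    avgPairDist, Nat.cast_choose_two, nsmul_eq_mul]
  field_simp
  push_cast
  ring

lemma sum_sum_sub_relDist_le {L : ℕ} (hL : 2 ≤ L) {θ ε : ℝ} (c : Fin L → Fin n → A)
    (hc : θ * (1 - ε) ≤ avgPairDist c) :
    ∑ i, ∑ j, (θ - relDist (c i) (c j)) ≤ L ^ 2 * θ * (ε + (1 - ε) / L) := by
  have hL' : (2 : ℝ) ≤ L := by exact_mod_cast hL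
  calc ∑ i, ∑ j, (θ - relDist (c i) (c j))
      = L ^ 2 * θ - L * (L - 1) * avgPairDist c := by
        simp only [Finset.sum_sub_distrib, Fin.sum_const, nsmul_eq_mul,
          sum_sum_relDist_eq_mul_avgPairDist hL]
        ring
    _ ≤ L ^ 2 * θ - L * (L - 1) * (θ * (1 - ε)) := by
        gcongr
        exact mul_nonneg (by linarith) (by linarith)
    _ = L ^ 2 * θ * (ε + (1 - ε) / L) := by
        field_simp
        ring

end RelDist

section SimplexEmbedding

variable {n : ℕ} {A : Type*} [Fintype A] [DecidableEq A]

lemma sum_centered_indicator_mul (a b : A) :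
    ∑ z, ((if a = z then 1 else 0) - 1 / (Fintype.card A : ℝ)) *
        ((if b = z then 1 else 0) - 1 / (Fintype.card A : ℝ)) =
      (if a = b then 1 else 0) - 1 / (Fintype.card A : ℝ) := by
  have : Nonempty A := ⟨a⟩
  have hdelta : ∑ z, (if a = z then (1 : ℝ) else 0) * (if b = z then 1 else 0) =
      if a = b then 1 else 0 := by
    simp
  simp only [sub_mul, mul_sub, Finset.sum_sub_distrib, hdelta, ← Finset.mul_sum,
    ← Finset.sum_mul, Finset.sum_ite_eq, Finset.mem_univ, if_true, Finset.sum_const,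
    Finset.card_univ, nsmul_eq_mul]
  field_simp
  ring

/-- The simplex embedding of words over `A` into Euclidean space: each letter is replaced by its
indicator vector minus the uniform vector, so that the letters become the vertices of a regular
simplex centred at the origin. -/
noncomputable def simplexEmbedding (x : Fin n → A) : EuclideanSpace ℝ (Fin n × A) :=
  WithLp.toLp 2 fun p ↦ (if x p.1 = p.2 then 1 else 0) - 1 / (Fintype.card A : ℝ)

lemma inner_simplexEmbedding (x y : Fin n → A) :
    inner ℝ (simplexEmbedding x) (simplexEmbedding y) =
      n * (1 - 1 / (Fintype.card A : ℝ) - relDist x y) := by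
  have hagree : ∑ i, (if x i = y i then (1 : ℝ) else 0) = n - hammingDist x y := by
    have h := Finset.card_filter_add_card_filter_not (s := Finset.univ) (fun i ↦ x i = y i)
    rw [Finset.sum_boole, eq_sub_iff_add_eq, hammingDist]
    exact_mod_cast h.trans (Finset.card_fin n)
  calc inner ℝ (simplexEmbedding x) (simplexEmbedding y)
      = ∑ i, ((if x i = y i then 1 else 0) - 1 / (Fintype.card A : ℝ)) := by
        simp only [simplexEmbedding, PiLp.inner_apply, Real.inner_apply, Fintype.sum_prod_type,
          sum_centered_indicator_mul]
    _ = n * (1 - 1 / (Fintype.card A : ℝ) - relDist x y) := by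
        rw [Finset.sum_sub_distrib, hagree, ← natCast_mul_relDist, Fin.sum_const, nsmul_eq_mul]
        ring

end SimplexEmbedding

section Johnson

variable {n : ℕ} {A : Type*} [Fintype A]

lemma sq_sum_sub_relDist_le {ι : Type*} [Fintype ι] (c : ι → Fin n → A) (y : Fin n → A) :
    (∑ i, (1 - 1 / (Fintype.card A : ℝ) - relDist (c i) y)) ^ 2 ≤
      (1 - 1 / (Fintype.card A : ℝ)) *
        ∑ i, ∑ j, (1 - 1 / (Fintype.card A : ℝ) - relDist (c i) (c j)) := by
  classical
  rcases n.eq_zero_or_pos with rfl | hn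
  · -- On empty words both sides agree, as every `relDist` is `0 / 0 = 0`.
    simp only [relDist, CharP.cast_eq_zero, div_zero, sub_zero, Finset.sum_const, nsmul_eq_mul]
    apply le_of_eq
    ring
  have hcauchy := real_inner_mul_inner_self_le (∑ i, simplexEmbedding (c i)) (simplexEmbedding y)
  simp only [sum_inner, inner_sum, inner_simplexEmbedding, relDist_self, ← Finset.mul_sum,
    sub_zero] at hcauchy
  rw [Finset.sum_comm] at hcauchy
  have hn' : (0 : ℝ) < (n : ℝ) ^ 2 := by positivity
  refine le_of_mul_le_mul_left ?_ hn'
  linarith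

theorem johnson_le_sum_relDist {L : ℕ} (hL : 2 ≤ L) {ε : ℝ} (c : Fin L → Fin n → A)
    (hc : (1 - 1 / (Fintype.card A : ℝ)) * (1 - ε) ≤ avgPairDist c) (y : Fin n → A) :
    L * ((1 - 1 / (Fintype.card A : ℝ)) * (1 - √(ε + (1 - ε) / L))) ≤
      ∑ i, relDist (c i) y := by
  have hcauchy := sq_sum_sub_relDist_le c y
  have hθ : 0 ≤ 1 - 1 / (Fintype.card A : ℝ) := Nat.one_sub_one_div_cast_nonneg _
  set θ := 1 - 1 / (Fintype.card A : ℝ)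
  have hpairs := sum_sum_sub_relDist_le hL c hc
  have hsq : (∑ i, (θ - relDist (c i) y)) ^ 2 ≤ (L * θ) ^ 2 * (ε + (1 - ε) / L) :=
    calc (∑ i, (θ - relDist (c i) y)) ^ 2
        ≤ θ * (L ^ 2 * θ * (ε + (1 - ε) / L)) := hcauchy.trans (by gcongr)
      _ = (L * θ) ^ 2 * (ε + (1 - ε) / L) := by ring
  have hsum : L * θ - ∑ i, relDist (c i) y ≤ L * θ * √(ε + (1 - ε) / L) :=
    calc L * θ - ∑ i, relDist (c i) y
        = ∑ i, (θ - relDist (c i) y) := by simp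
      _ ≤ √((L * θ) ^ 2 * (ε + (1 - ε) / L)) := Real.le_sqrt_of_sq_le hsq
      _ = L * θ * √(ε + (1 - ε) / L) := by
          rw [Real.sqrt_mul (sq_nonneg _), Real.sqrt_sq (by positivity)]
  linarith

lemma simplified_johnson_radius_le (q L : ℕ) {ε : ℝ} (hε : 0 ≤ ε) :
    (1 - 1 / (q : ℝ)) * (1 - √(ε + 1 / (L : ℝ))) ≤
      (1 - 1 / (q : ℝ)) * (1 - √(ε + (1 - ε) / L)) := by
  have hq : 0 ≤ 1 - 1 / (q : ℝ) := Nat.one_sub_one_div_cast_nonneg q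
  gcongr
  linarith

end Johnson

section ListDecodable

variable {n : ℕ} {A : Type*} [Finite A] {C : Set (Fin n → A)}

lemma listDecodable.anti_radius {ρ ρ' L : ℝ} (hρ : ρ ≤ ρ')
    (h : listDecodable C ρ' L) : listDecodable C ρ L := fun y ↦ by
  have hball : {c | c ∈ C ∧ relDist c y < ρ} ⊆ {c | c ∈ C ∧ relDist c y < ρ'} :=
    fun c hc ↦ ⟨hc.1, hc.2.trans_le hρ⟩
  exact (Nat.cast_le.mpr (Set.ncard_le_ncard hball)).trans (h y)

lemma listDecodable_of_forall_exists_le_relDist {L : ℕ} {ρ : ℝ}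
    (h : ∀ c : Fin L → Fin n → A, Function.Injective c → (∀ i, c i ∈ C) →
      ∀ y, ∃ i, ρ ≤ relDist (c i) y) :
    listDecodable C ρ (L - 1) := by
  intro y
  by_contra! hball
  have hcard : L ≤ {c | c ∈ C ∧ relDist c y < ρ}.ncard := by
    rw [← Nat.lt_add_one_iff]
    exact_mod_cast sub_lt_iff_lt_add.mp hball
  obtain ⟨T, hT, hTcard⟩ := Set.exists_subset_card_eq hcard
  let e : Fin L ≃ T := (Finite.equivFinOfCardEq hTcard).symm
  obtain ⟨i, hi⟩ := h (fun i ↦ e i) (Subtype.val_injective.comp e.injective)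
    (fun i ↦ (hT (e i).2).1) y
  exact hi.not_gt (hT (e i).2).2

end ListDecodable

theorem stmt4_general {n L : ℕ} {A : Type*} [Fintype A] (hL : 2 ≤ L) (C : Set (Fin n → A)) (ε : ℝ)
    (havg : ∀ c : Fin L → Fin n → A, Function.Injective c → (∀ i, c i ∈ C) →
      (1 - 1 / (Fintype.card A : ℝ)) * (1 - ε) ≤ avgPairDist c) :
    listDecodable C ((1 - 1 / (Fintype.card A : ℝ)) * (1 - √(ε + (1 - ε) / L))) (L - 1) := by
  refine listDecodable_of_forall_exists_le_relDist fun c hinj hmem y ↦ ?_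
  have : NeZero L := ⟨by lia⟩
  have hsum := johnson_le_sum_relDist hL c (havg c hinj hmem) y
  rw [← nsmul_eq_mul, ← Fin.sum_const] at hsum
  obtain ⟨i, -, hi⟩ := Finset.exists_le_of_sum_le Finset.univ_nonempty hsum
  exact ⟨i, hi⟩

/-- Simplified average-distance Johnson bound near radius 1 − 1/q.  If every
L distinct codewords of C have average pairwise relative distance at least
(1 − 1/q)(1 − ε), then C is ((1 − 1/q)(1 − √(ε + 1/L)), L − 1)-list decodable. -/
theorem stmt4 (q L n : ℕ) (hq : 2 ≤ q) (hL : 2 ≤ L)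
    (C : Set (Fin n → Fin q)) (ε : ℝ) (hε0 : 0 ≤ ε) (hε1 : ε ≤ 1)
    (havg : ∀ c : Fin L → (Fin n → Fin q),
      Function.Injective c → (∀ i, c i ∈ C) →
        (1 - 1 / (q : ℝ)) * (1 - ε) ≤ avgPairDist c) :
    listDecodable C ((1 - 1 / (q : ℝ)) * (1 - Real.sqrt (ε + 1 / (L : ℝ)))) ((L : ℝ) - 1) := by
  have hsharp := stmt4_general hL C ε (by simpa only [Fintype.card_fin] using havg)
  exact hsharp.anti_radius <| by
    simpa only [Fintype.card_fin] using simplified_johnson_radius_le q L hε0
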